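/- Let d ≥ 3 and let C be a positive semidefinite matrix on ℂ^d⊗ℂ^d with rank r ≥ 4. Suppose one of the following holds: (i) r < d² and r is a perfect square; (ii) r < (d−√d)² and 0 ≠ r − ⌊√r⌋² ≤ ⌊√r⌋; (iii) r < (d−√(2d))² and r − ⌊√r⌋² > ⌊√r⌋. Then there exists a unitary U on ℂ^d⊗ℂ^d such that for every diagonal matrix D on ℂ^d⊗ℂ^d whose diagonal entries are a permutation of the eigenvalues of C (with multiplicity), the vector λ(tr_1[UCU*]) ⊕ λ(tr_2[UCU*]) is NOT majorized by λ(tr_1[D]) ⊕ λ(tr_2[D]). -/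

import Mathlib

open Matrix Finset Kronecker
open scoped ComplexOrder

/-- The first partial trace of a matrix on `ℂ^{d1} ⊗ ℂ^{d2}` (index pairs `(i,s)` ordered
lexicographically): `(tr_1 C)_{s,t} = ∑_i C_{(i,s),(i,t)}`. -/
noncomputable def ptrace1 {d1 d2 : ℕ} (C : Matrix (Fin d1 × Fin d2) (Fin d1 × Fin d2) ℂ) :
    Matrix (Fin d2) (Fin d2) ℂ :=
  Matrix.of fun s t => ∑ i : Fin d1, C (i, s) (i, t)

/-- The second partial trace: `(tr_2 C)_{i,j} = ∑_s C_{(i,s),(j,s)}`. -/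
noncomputable def ptrace2 {d1 d2 : ℕ} (C : Matrix (Fin d1 × Fin d2) (Fin d1 × Fin d2) ℂ) :
    Matrix (Fin d1) (Fin d1) ℂ :=
  Matrix.of fun i j => ∑ s : Fin d2, C (i, s) (j, s)

/-- The sum of the `k` largest entries of the vector `x` (the largest value of a sum of `k`
entries of `x`), i.e. `∑_{i=1}^k x_i^↓`. -/
noncomputable def maxSum {ι : Type*} [Fintype ι] (x : ι → ℝ) (k : ℕ) : ℝ :=
  sSup {s : ℝ | ∃ A : Finset ι, A.card = k ∧ s = ∑ i ∈ A, x i}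

/-- `x ≺ y` (majorization): for every `k`, the sum of the `k` largest entries of `x` is at
most the sum of the `k` largest entries of `y`, and the total sums are equal. -/
def Majorizes {ι κ : Type*} [Fintype ι] [Fintype κ] (x : ι → ℝ) (y : κ → ℝ) : Prop :=
  (∀ k : ℕ, maxSum x k ≤ maxSum y k) ∧ ∑ i, x i = ∑ j, y j

/-- `x ≺_w y` (weak majorization). -/
def WeakMajorizes {ι κ : Type*} [Fintype ι] [Fintype κ] (x : ι → ℝ) (y : κ → ℝ) : Prop :=
  ∀ k : ℕ, maxSum x k ≤ maxSum y k

/-!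
List the eigenvalues of `C` in a `d₁ × d₂` grid: for diagonal `D` the two partial traces have the
column and row sums of the grid as eigenvalues, and in general they majorize the column and row
sums of the diagonal. Call an arrangement packed if its support fits into an `a × b` box, so that
`a + b` lines carry all the mass; among the packed arrangements take one whose heaviest line `J` is
as heavy as possible. If `f p < f q` with `p` on `J` and `q` off `J`, a unitary moves a small
fraction `ε` of `f q` into the cell `p`. For small `ε` the `a + b` heaviest lines of the result
still weigh more than those of any arrangement that is not packed, while its heaviest line weighs
more than that of any packed arrangement, so no arrangement majorizes it. Such `p` and `q` exist:
otherwise the support lies in `J` or contains `J`, and then it meets more than `a + b` lines.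
-/

section Majorization

variable {ι κ : Type*} [Fintype ι] [Fintype κ]

lemma sum_le_maxSum (x : ι → ℝ) (A : Finset ι) : ∑ i ∈ A, x i ≤ maxSum x #A := by
  refine le_csSup ((Set.finite_range fun B : Finset ι => ∑ i ∈ B, x i).subset ?_).bddAbove
    ⟨A, rfl, rfl⟩
  rintro _ ⟨B, -, rfl⟩
  exact ⟨B, rfl⟩

lemma le_maxSum_one (x : ι → ℝ) (i : ι) : x i ≤ maxSum x 1 := by
  simpa using sum_le_maxSum x {i}

lemma exists_maxSum_eq_sum (x : ι → ℝ) {k : ℕ} (hk : k ≤ Fintype.card ι) :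
    ∃ A : Finset ι, #A = k ∧ maxSum x k = ∑ i ∈ A, x i := by
  obtain ⟨A, -, hA⟩ := exists_subset_card_eq (s := univ) hk
  exact Set.Nonempty.csSup_mem (s := {s : ℝ | ∃ A : Finset ι, #A = k ∧ s = ∑ i ∈ A, x i})
    ⟨_, A, hA, rfl⟩ ((Set.finite_range fun B : Finset ι => ∑ i ∈ B, x i).subset
      fun _ ⟨B, _, hB⟩ => ⟨B, hB.symm⟩)

lemma exists_maxSum_one_eq [Nonempty ι] (x : ι → ℝ) : ∃ i, maxSum x 1 = x i := by
  obtain ⟨A, hA, hsum⟩ := exists_maxSum_eq_sum x Fintype.card_pos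
  obtain ⟨i, rfl⟩ := card_eq_one.1 hA
  exact ⟨i, by simpa using hsum⟩

lemma mul_maxSum_le_maxSum_smul_add (c : ℝ) (x : ι → ℝ) {y : ι → ℝ} (hy : 0 ≤ y) {k : ℕ}
    (hk : k ≤ Fintype.card ι) : c * maxSum x k ≤ maxSum (c • x + y) k := by
  obtain ⟨A, rfl, hA⟩ := exists_maxSum_eq_sum x hk
  calc c * maxSum x #A = ∑ i ∈ A, c * x i := by rw [hA, mul_sum]
    _ ≤ ∑ i ∈ A, (c • x + y) i := sum_le_sum fun i _ => le_add_of_nonneg_right (hy i)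
    _ ≤ maxSum (c • x + y) #A := sum_le_maxSum _ _

lemma WeakMajorizes.trans {μ : Type*} [Fintype μ] {x : ι → ℝ} {y : κ → ℝ} {z : μ → ℝ}
    (hxy : WeakMajorizes x y) (hyz : WeakMajorizes y z) : WeakMajorizes x z :=
  fun k => (hxy k).trans (hyz k)

lemma weakMajorizes_of_forall_sum_le {x y : ι → ℝ}
    (h : ∀ A : Finset ι, ∑ i ∈ A, x i ≤ maxSum y #A) : WeakMajorizes x y := by
  intro k
  by_cases hk : ∃ A : Finset ι, #A = k
  · obtain ⟨A, hA⟩ := hk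
    refine csSup_le ⟨_, A, hA, rfl⟩ ?_
    rintro _ ⟨B, rfl, rfl⟩
    exact h B
  · -- both sides are the junk value `sSup ∅`
    push Not at hk
    simp [maxSum, hk]

lemma WeakMajorizes.sumElim {x y : ι → ℝ} {x' y' : κ → ℝ} (h : WeakMajorizes x y)
    (h' : WeakMajorizes x' y') : WeakMajorizes (Sum.elim x x') (Sum.elim y y') := by
  refine weakMajorizes_of_forall_sum_le fun A => ?_
  obtain ⟨B, hB, hBsum⟩ := exists_maxSum_eq_sum y (card_le_univ A.toLeft)
  obtain ⟨B', hB', hBsum'⟩ := exists_maxSum_eq_sum y' (card_le_univ A.toRight)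
  calc ∑ i ∈ A, Sum.elim x x' i
      = ∑ i ∈ A.toLeft, x i + ∑ i ∈ A.toRight, x' i := sum_sum_eq_sum_toLeft_add_sum_toRight _ _
    _ ≤ maxSum y #A.toLeft + maxSum y' #A.toRight :=
        add_le_add ((sum_le_maxSum _ _).trans (h _)) ((sum_le_maxSum _ _).trans (h' _))
    _ = ∑ i ∈ B.disjSum B', Sum.elim y y' i := by rw [hBsum, hBsum', sum_disjSum]; rfl
    _ ≤ maxSum (Sum.elim y y') #(B.disjSum B') := sum_le_maxSum _ _
    _ = maxSum (Sum.elim y y') #A := by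
        rw [card_disjSum, hB, hB', card_toLeft_add_card_toRight]

lemma weakMajorizes_mulVec_of_mem_doublyStochastic [DecidableEq ι] {P : Matrix ι ι ℝ}
    (hP : P ∈ doublyStochastic ℝ ι) (y : ι → ℝ) : WeakMajorizes (P *ᵥ y) y := by
  refine weakMajorizes_of_forall_sum_le fun A => ?_
  obtain ⟨w, hw₀, hw₁, rfl⟩ := exists_eq_sum_perm_of_mem_doublyStochastic hP
  calc ∑ i ∈ A, ((∑ σ, w σ • σ.permMatrix ℝ) *ᵥ y) i
      = ∑ σ, w σ * ∑ i ∈ A, y (σ i) := by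
        simp only [sum_mulVec, smul_mulVec, permMatrix_mulVec, Finset.sum_apply, Pi.smul_apply,
          Function.comp_apply, smul_eq_mul, mul_sum]
        exact sum_comm
    _ ≤ ∑ σ, w σ * maxSum y #A := by
        gcongr with σ
        · exact hw₀ σ
        · simpa using sum_le_maxSum y (A.map σ.toEmbedding)
    _ = maxSum y #A := by rw [← sum_mul, hw₁, one_mul]

end Majorization

section StarRing

variable {R n : Type*} [CommRing R] [StarRing R] [Fintype n] [DecidableEq n]

lemma permMatrix_mem_unitaryGroup (σ : Equiv.Perm n) : σ.permMatrix R ∈ unitaryGroup n R := by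
  rw [mem_unitaryGroup_iff, star_eq_conjTranspose, conjTranspose_permMatrix, ← permMatrix_mul,
    inv_mul_cancel, permMatrix_one]

lemma permMatrix_mul_diagonal_mul_conjTranspose (σ : Equiv.Perm n) (f : n → R) :
    σ.permMatrix R * diagonal f * (σ.permMatrix R)ᴴ = diagonal (f ∘ σ) := by
  rw [conjTranspose_permMatrix, PEquiv.toMatrix_toPEquiv_mul, PEquiv.mul_toMatrix_toPEquiv]
  exact submatrix_diagonal_equiv f σ

lemma smul_one_add_smul_mul_mul_conjTranspose {c s : R}
    (hcs : c * star s = -(s * star c)) {S : Matrix n n R} (hS : Sᴴ = S) (D : Matrix n n R) :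
    (c • 1 + s • S) * D * (c • 1 + s • S)ᴴ =
      (c * star c) • D + (s * star s) • (S * D * S) + (s * star c) • (S * D - D * S) := by
  simp only [conjTranspose_add, conjTranspose_smul, conjTranspose_one, hS, add_mul, mul_add,
    Matrix.smul_mul, Matrix.mul_smul, one_mul, mul_one, smul_sub, smul_smul]
  rw [mul_comm (star s) c, hcs]
  module

end StarRing

section Spectral

variable {𝕜 n : Type*} [RCLike 𝕜] [Fintype n] [DecidableEq n]

lemma norm_sq_mem_doublyStochastic {U : Matrix n n 𝕜} (hU : U ∈ unitaryGroup n 𝕜) :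
    (of fun i j => ‖U i j‖ ^ 2) ∈ doublyStochastic ℝ n := by
  refine mem_doublyStochastic_iff_sum.2 ⟨fun i j => by simp, fun i => ?_, fun j => ?_⟩ <;>
    apply RCLike.ofReal_injective (K := 𝕜)
  · simpa [mul_apply, RCLike.mul_conj] using congrFun₂ (mem_unitaryGroup_iff.1 hU) i i
  · simpa [mul_apply, RCLike.conj_mul] using congrFun₂ (mem_unitaryGroup_iff'.1 hU) j j

lemma weakMajorizes_re_diag_conj_diagonal {U : Matrix n n 𝕜} (hU : U ∈ unitaryGroup n 𝕜)
    (f : n → ℝ) :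
    WeakMajorizes (fun i => RCLike.re ((U * diagonal (fun j => (f j : 𝕜)) * Uᴴ) i i)) f := by
  convert weakMajorizes_mulVec_of_mem_doublyStochastic (norm_sq_mem_doublyStochastic hU) f
    using 2 with i
  have hterm (j : n) : U i j * f j * star (U i j) = ((‖U i j‖ ^ 2 * f j : ℝ) : 𝕜) := by
    rw [mul_right_comm, RCLike.star_def, RCLike.mul_conj]
    push_cast
    rfl
  simp only [mul_apply (M := U * _), mul_diagonal, conjTranspose_apply, hterm, ← RCLike.ofReal_sum,
    RCLike.ofReal_re]
  rfl

lemma weakMajorizes_re_diag_eigenvalues {M : Matrix n n 𝕜} (hM : M.IsHermitian) :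
    WeakMajorizes (fun i => RCLike.re (M i i)) hM.eigenvalues := by
  have h := weakMajorizes_re_diag_conj_diagonal hM.eigenvectorUnitary.2 hM.eigenvalues
  have hspec : (hM.eigenvectorUnitary * diagonal (fun j => (hM.eigenvalues j : 𝕜)) *
      (hM.eigenvectorUnitary : Matrix n n 𝕜)ᴴ) = M := hM.spectral_theorem.symm
  rwa [hspec] at h

lemma weakMajorizes_eigenvalues_re_diag {M : Matrix n n 𝕜} (hM : M.IsHermitian)
    (hdiag : M.IsDiag) : WeakMajorizes hM.eigenvalues (fun i => RCLike.re (M i i)) := by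
  have hMdiag : diagonal (fun i => (RCLike.re (M i i) : 𝕜)) = M := by
    simpa only [hM.coe_re_apply_self] using! hdiag.diagonal_diag
  have h := weakMajorizes_re_diag_conj_diagonal (star hM.eigenvectorUnitary).2
    fun i => RCLike.re (M i i)
  have hspec : star hM.eigenvectorUnitary.1 * M * (star hM.eigenvectorUnitary.1)ᴴ =
      diagonal (fun i => (hM.eigenvalues i : 𝕜)) := hM.conjStarAlgAut_star_eigenvectorUnitary
  rw [hMdiag, Unitary.coe_star, hspec] at h
  simpa using h

lemma exists_unitary_conj_eq_diagonal {C : Matrix n n 𝕜} (hC : C.IsHermitian)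
    (g : Equiv.Perm n) : ∃ W ∈ unitaryGroup n 𝕜,
      W * C * Wᴴ = diagonal (fun i => (hC.eigenvalues (g i) : 𝕜)) := by
  have hspec : star hC.eigenvectorUnitary.1 * C * hC.eigenvectorUnitary.1 =
      diagonal (RCLike.ofReal ∘ hC.eigenvalues) := by
    simpa using hC.conjStarAlgAut_star_eigenvectorUnitary
  refine ⟨g.permMatrix 𝕜 * star hC.eigenvectorUnitary.1,
    mul_mem (permMatrix_mem_unitaryGroup g) (star hC.eigenvectorUnitary).2, ?_⟩
  calc g.permMatrix 𝕜 * star hC.eigenvectorUnitary.1 * C *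
        (g.permMatrix 𝕜 * star hC.eigenvectorUnitary.1)ᴴ
      = g.permMatrix 𝕜 * (star hC.eigenvectorUnitary.1 * C * hC.eigenvectorUnitary.1) *
          (g.permMatrix 𝕜)ᴴ := by
        simp only [conjTranspose_mul, star_eq_conjTranspose, conjTranspose_conjTranspose, mul_assoc]
    _ = diagonal (fun i => (hC.eigenvalues (g i) : 𝕜)) := by
        rw [hspec, permMatrix_mul_diagonal_mul_conjTranspose]
        rfl

lemma exists_unitary_diag_conj_diagonal_eq {τ : Equiv.Perm n} (hτ : τ * τ = 1) {ε : ℝ}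
    (hε : ε ∈ Set.Icc 0 1) : ∃ R ∈ unitaryGroup n ℂ, ∀ (f : n → ℝ) (i : n),
      (R * diagonal (fun j => (f j : ℂ)) * Rᴴ) i i = (((1 - ε) • f + ε • (f ∘ τ)) i : ℝ) := by
  set S : Matrix n n ℂ := τ.permMatrix ℂ
  set c : ℂ := ((√(1 - ε) : ℝ) : ℂ) with hc
  set s : ℂ := Complex.I * ((√ε : ℝ) : ℂ) with hs
  have hS : Sᴴ = S := by rw [conjTranspose_permMatrix, inv_eq_of_mul_eq_one_left hτ]
  have hSS : S * S = 1 := by rw [← permMatrix_mul, hτ, permMatrix_one]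
  have hcc : c * star c = ((1 - ε : ℝ) : ℂ) := by
    simp [hc, ← Complex.ofReal_mul, Real.mul_self_sqrt (sub_nonneg.2 hε.2)]
  have hss : s * star s = (ε : ℂ) := by
    rw [hs, star_mul', mul_mul_mul_comm]
    simp [← Complex.ofReal_mul, Real.mul_self_sqrt hε.1]
  have hcs : c * star s = -(s * star c) := by
    simp [hc, hs]
    ring
  have hconj := smul_one_add_smul_mul_mul_conjTranspose hcs hS
  rw [hcc, hss] at hconj
  refine ⟨c • 1 + s • S, ?_, fun f i => ?_⟩
  · have hone := hconj 1
    rw [mul_one, mul_one, hSS, one_mul, sub_self, smul_zero, add_zero, ← add_smul,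
      ← Complex.ofReal_add, sub_add_cancel, Complex.ofReal_one, one_smul] at hone
    exact mem_unitaryGroup_iff.2 hone
  · have hdiag : S * diagonal (fun j => (f j : ℂ)) * S = diagonal (fun j => (f (τ j) : ℂ)) := by
      nth_rw 2 [← hS]
      exact permMatrix_mul_diagonal_mul_conjTranspose τ _
    rw [hconj, hdiag]
    simp [mul_comm]

lemma exists_unitary_diag_conj_eq {C : Matrix n n ℂ} (hC : C.IsHermitian) (g : Equiv.Perm n)
    {τ : Equiv.Perm n} (hτ : τ * τ = 1) {ε : ℝ} (hε : ε ∈ Set.Icc 0 1) :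
    ∃ U ∈ unitaryGroup n ℂ, ∀ i, (U * C * Uᴴ) i i =
      (((1 - ε) • (hC.eigenvalues ∘ g) + ε • (hC.eigenvalues ∘ g ∘ τ)) i : ℝ) := by
  obtain ⟨W, hW, hWC⟩ := exists_unitary_conj_eq_diagonal hC g
  obtain ⟨R, hR, hRdiag⟩ := exists_unitary_diag_conj_diagonal_eq hτ hε
  refine ⟨R * W, mul_mem hR hW, fun i => ?_⟩
  calc (R * W * C * (R * W)ᴴ) i i = (R * (W * C * Wᴴ) * Rᴴ) i i := by
        simp only [conjTranspose_mul, mul_assoc]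
    _ = (((1 - ε) • (hC.eigenvalues ∘ g) + ε • (hC.eigenvalues ∘ g ∘ τ)) i : ℝ) := by
        rw [hWC]
        exact hRdiag (hC.eigenvalues ∘ g) i

end Spectral

section Marginals

variable {α β : Type*} [Fintype α] [Fintype β]

/-- The lines of an `α × β` grid: the column `univ ×ˢ {t}` for `Sum.inl t`, the row
`{i} ×ˢ univ` for `Sum.inr i`. Columns come first because `ptrace1` acts on the second factor. -/
def gridLine : β ⊕ α → Finset (α × β) :=
  Sum.elim (fun t => univ ×ˢ {t}) (fun i => {i} ×ˢ univ)

@[simp]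
lemma mem_gridLine_inl {t : β} {x : α × β} : x ∈ gridLine (.inl t) ↔ x.2 = t := by
  simp only [gridLine, Sum.elim_inl, mem_product, mem_univ, mem_singleton, true_and]

@[simp]
lemma mem_gridLine_inr {i : α} {x : α × β} : x ∈ gridLine (.inr i) ↔ x.1 = i := by
  simp only [gridLine, Sum.elim_inr, mem_product, mem_univ, mem_singleton, and_true]

@[simp]
lemma card_gridLine_inl (t : β) : #(gridLine (.inl t) : Finset (α × β)) = Fintype.card α := by
  simp [gridLine]

@[simp]
lemma card_gridLine_inr (i : α) : #(gridLine (.inr i) : Finset (α × β)) = Fintype.card β := by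
  simp [gridLine]

/-- The vector of all column and row sums of an array, indexed by the lines of its grid. -/
def marginals (f : α × β → ℝ) (J : β ⊕ α) : ℝ :=
  ∑ x ∈ gridLine J, f x

lemma marginals_inl (f : α × β → ℝ) (t : β) : marginals f (.inl t) = ∑ i, f (i, t) := by
  simp [marginals, gridLine]

lemma marginals_inr (f : α × β → ℝ) (i : α) : marginals f (.inr i) = ∑ t, f (i, t) := by
  simp [marginals, gridLine]

lemma marginals_add (f g : α × β → ℝ) : marginals (f + g) = marginals f + marginals g :=
  funext fun _ => sum_add_distrib

lemma marginals_smul (c : ℝ) (f : α × β → ℝ) : marginals (c • f) = c • marginals f :=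
  funext fun _ => (mul_sum _ _ _).symm

lemma marginals_nonneg {f : α × β → ℝ} (hf : 0 ≤ f) : 0 ≤ marginals f :=
  fun _ => sum_nonneg fun x _ => hf x

lemma sum_marginals (f : α × β → ℝ) : ∑ J, marginals f J = 2 * ∑ x, f x := by
  simp only [Fintype.sum_sum_type, marginals_inl, marginals_inr]
  rw [sum_comm, ← Fintype.sum_prod_type', two_mul]

lemma marginals_comp_swap [DecidableEq α] [DecidableEq β] (f : α × β → ℝ) {J : β ⊕ α}
    {p q : α × β} (hp : p ∈ gridLine J) (hq : q ∉ gridLine J) :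
    marginals (f ∘ Equiv.swap p q) J = marginals f J - f p + f q := by
  have herase : ∑ x ∈ (gridLine J).erase p, f (Equiv.swap p q x) =
      ∑ x ∈ (gridLine J).erase p, f x := by
    refine sum_congr rfl fun x hx => congrArg f ?_
    exact Equiv.swap_apply_of_ne_of_ne (ne_of_mem_erase hx)
      (ne_of_mem_of_not_mem (mem_of_mem_erase hx) hq)
  simp only [marginals, Function.comp_apply]
  rw [← add_sum_erase _ _ hp, ← add_sum_erase _ f hp, herase, Equiv.swap_apply_left]
  ring

lemma marginals_lt_marginals_mix_swap [DecidableEq α] [DecidableEq β] {f : α × β → ℝ} {J : β ⊕ α}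
    {p q : α × β} (hp : p ∈ gridLine J) (hq : q ∉ gridLine J) (hpq : f p < f q) {ε : ℝ}
    (hε : 0 < ε) :
    marginals f J < marginals ((1 - ε) • f + ε • (f ∘ Equiv.swap p q)) J := by
  simp only [marginals_add, marginals_smul, Pi.add_apply, Pi.smul_apply, smul_eq_mul,
    marginals_comp_swap f hp hq]
  linarith [mul_pos hε (sub_pos.2 hpq)]

lemma maxSum_marginals_le {f : α × β → ℝ} (hf : 0 ≤ f) {k : ℕ}
    (hk : k ≤ Fintype.card (β ⊕ α)) : maxSum (marginals f) k ≤ 2 * ∑ x, f x := by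
  obtain ⟨A, -, hA⟩ := exists_maxSum_eq_sum (marginals f) hk
  rw [hA, ← sum_marginals]
  exact sum_le_univ_sum_of_nonneg (marginals_nonneg hf)

lemma sum_marginals_eq_two_mul_iff {f : α × β → ℝ} (hf : 0 ≤ f) {A : Finset (β ⊕ α)} :
    ∑ J ∈ A, marginals f J = 2 * ∑ x, f x ↔
      ({x | f x ≠ 0} : Finset (α × β)) ⊆ A.toRight ×ˢ A.toLeft := by
  classical
  rw [← sum_marginals, ← sum_add_sum_compl A, left_eq_add,
    sum_eq_zero_iff_of_nonneg fun J _ => marginals_nonneg hf J]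
  simp only [marginals, sum_eq_zero_iff_of_nonneg fun x _ => hf x, mem_compl, subset_iff,
    mem_filter_univ, mem_product, mem_toLeft, mem_toRight]
  constructor
  · intro h x hx
    exact ⟨by_contra fun hA => hx (h _ hA x (by simp)), by_contra fun hA => hx (h _ hA x (by simp))⟩
  · rintro h (t | i) hA x hx <;> by_contra hfx
    · exact hA (mem_gridLine_inl.1 hx ▸ (h hfx).2)
    · exact hA (mem_gridLine_inr.1 hx ▸ (h hfx).1)

end Marginals

section Counting

variable {α β : Type*} [Fintype α] [Fintype β]

lemma card_lt_card_of_subset_gridLine {S : Finset (α × β)} {A : Finset (β ⊕ α)} {J : β ⊕ α}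
    (hS : S.Nonempty) (hSA : S ⊆ A.toRight ×ˢ A.toLeft) (hSJ : S ⊆ gridLine J) : #S < #A := by
  obtain ⟨x, hx⟩ := hS
  have hxA := mem_product.1 (hSA hx)
  have hleft : 0 < #A.toLeft := card_pos.2 ⟨_, hxA.2⟩
  have hright : 0 < #A.toRight := card_pos.2 ⟨_, hxA.1⟩
  rw [← card_toLeft_add_card_toRight]
  rcases J with t | i
  · have hle : #S ≤ #A.toRight := by
      refine card_le_card_of_injOn Prod.fst (fun y hy => (mem_product.1 (hSA hy)).1) ?_
      intro y hy z hz hyz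
      exact Prod.ext hyz ((mem_gridLine_inl.1 (hSJ hy)).trans (mem_gridLine_inl.1 (hSJ hz)).symm)
    lia
  · have hle : #S ≤ #A.toLeft := by
      refine card_le_card_of_injOn Prod.snd (fun y hy => (mem_product.1 (hSA hy)).2) ?_
      intro y hy z hz hyz
      exact Prod.ext ((mem_gridLine_inr.1 (hSJ hy)).trans (mem_gridLine_inr.1 (hSJ hz)).symm) hyz
    lia

lemma sq_card_gridLine_add_card_le {S : Finset (α × β)} {A : Finset (β ⊕ α)} {J : β ⊕ α}
    (hSA : S ⊆ A.toRight ×ˢ A.toLeft) (hJS : gridLine J ⊆ S) :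
    #(gridLine J) ^ 2 + #S ≤ #(gridLine J) * #A := by
  have hcard : #S ≤ #A.toRight * #A.toLeft := card_product A.toRight A.toLeft ▸ card_le_card hSA
  rw [← card_toLeft_add_card_toRight]
  rcases J with t | i
  · have hmem (i : α) : (i, t) ∈ A.toRight ×ˢ A.toLeft := hSA (hJS (mem_gridLine_inl.2 rfl))
    have hright : A.toRight = univ := eq_univ_of_forall fun i => (mem_product.1 (hmem i)).1
    rw [hright, card_univ] at hcard ⊢
    rw [card_gridLine_inl]
    linarith
  · have hmem (t : β) : (i, t) ∈ A.toRight ×ˢ A.toLeft := hSA (hJS (mem_gridLine_inr.2 rfl))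
    have hleft : A.toLeft = univ := eq_univ_of_forall fun t => (mem_product.1 (hmem t)).2
    rw [hleft, card_univ] at hcard ⊢
    rw [card_gridLine_inr]
    linarith

/-- An `a × b` box of an `m × n` grid that holds `r` cells and meets fewer lines than any `r` cells
that lie in a line or contain one. Cells in a line meet at least `r + 1` lines, cells containing a
column at least `m + r / m` and cells containing a row at least `n + r / n`. -/
structure IsTightBox (m n r a b : ℕ) : Prop where
  pos : 0 < r
  le_rows : a ≤ m
  le_cols : b ≤ n
  le_area : r ≤ a * b
  le_cells : a + b ≤ r
  mul_lt_of_column : m * (a + b) < m ^ 2 + r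
  mul_lt_of_row : n * (a + b) < n ^ 2 + r

lemma IsTightBox.exists_lt {f : α × β → ℝ} {a b : ℕ}
    (hbox : IsTightBox (Fintype.card α) (Fintype.card β) #{x | f x ≠ 0} a b) (hf : 0 ≤ f)
    {A : Finset (β ⊕ α)} (hAcard : #A = a + b)
    (hA : ({x | f x ≠ 0} : Finset (α × β)) ⊆ A.toRight ×ˢ A.toLeft) (J : β ⊕ α) :
    ∃ p ∈ gridLine J, ∃ q ∉ gridLine J, f p < f q := by
  by_contra! hJ
  by_cases hfull : gridLine J ⊆ ({x | f x ≠ 0} : Finset (α × β))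
  · have hle := sq_card_gridLine_add_card_le hA hfull
    rw [hAcard] at hle
    rcases J with t | i
    · exact hbox.mul_lt_of_column.not_ge (by simpa using hle)
    · exact hbox.mul_lt_of_row.not_ge (by simpa using hle)
  · obtain ⟨p, hp, hfp⟩ := not_subset.1 hfull
    have hsub : ({x | f x ≠ 0} : Finset (α × β)) ⊆ gridLine J := by
      intro q hq
      by_contra hqJ
      have hle := hJ p hp q hqJ
      simp only [mem_filter_univ, not_not] at hq hfp
      exact hq (le_antisymm (hfp ▸ hle) (hf q))
    have hlt := card_lt_card_of_subset_gridLine (card_pos.1 hbox.pos) hA hsub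
    exact hlt.not_ge (hAcard ▸ hbox.le_cells)

end Counting

section Rearrangement

lemma exists_perm_forall_mem_imp_mem {ι : Type*} [Finite ι] {S T : Finset ι}
    (h : #S ≤ #T) : ∃ g : Equiv.Perm ι, ∀ i, g i ∈ S → i ∈ T := by
  classical
  obtain ⟨T', hT', hcard⟩ := exists_subset_card_eq h
  let e : {i // i ∈ T'} ≃ {i // i ∈ S} := equivOfCardEq hcard
  exact ⟨e.extendSubtype, fun i hi =>
    by_contra fun hiT => e.extendSubtype_not_mem i (fun hi' => hiT (hT' hi')) hi⟩

lemma exists_mem_Ioo_forall_lt_mul {ι : Type*} [Finite ι] {x : ι → ℝ} {T : ℝ}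
    (h : ∀ i, x i < T) : ∃ ε ∈ Set.Ioo (0 : ℝ) 1, ∀ i, x i < (1 - ε) * T := by
  have hcont : Filter.Tendsto (fun ε : ℝ => (1 - ε) * T) (nhdsWithin 0 (Set.Ioi 0)) (nhds T) := by
    refine Filter.Tendsto.mono_left ?_ nhdsWithin_le_nhds
    exact Continuous.tendsto' (by fun_prop) _ _ (by simp)
  have hIoo : ∀ᶠ ε : ℝ in nhdsWithin 0 (Set.Ioi 0), ε ∈ Set.Ioo 0 1 := Ioo_mem_nhdsGT one_pos
  exact (hIoo.and (Filter.eventually_all.2 fun i => hcont.eventually_const_lt (h i))).exists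

variable {α β : Type*} [Fintype α] [Fintype β] {l : α × β → ℝ}

lemma exists_perm_maxSum_marginals_eq (hl : 0 ≤ l) {a b : ℕ} (ha : a ≤ Fintype.card α)
    (hb : b ≤ Fintype.card β) (hab : #{x | l x ≠ 0} ≤ a * b) :
    ∃ g : Equiv.Perm (α × β), maxSum (marginals (l ∘ g)) (a + b) = 2 * ∑ x, l x := by
  obtain ⟨R, -, hR⟩ := exists_subset_card_eq (s := (univ : Finset α)) ha
  obtain ⟨C, -, hC⟩ := exists_subset_card_eq (s := (univ : Finset β)) hb
  obtain ⟨g, hg⟩ := exists_perm_forall_mem_imp_mem (S := {x | l x ≠ 0}) (T := R ×ˢ C)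
    (by rwa [card_product, hR, hC])
  have hlg : 0 ≤ l ∘ g := fun x => hl (g x)
  have hcard : #(C.disjSum R) = a + b := by rw [card_disjSum, hR, hC, add_comm]
  have hsupp : ({x | (l ∘ g) x ≠ 0} : Finset (α × β)) ⊆
      (C.disjSum R).toRight ×ˢ (C.disjSum R).toLeft := by
    rw [toRight_disjSum, toLeft_disjSum]
    exact fun x hx => hg x (by simpa using hx)
  have hsum : ∑ x, (l ∘ g) x = ∑ x, l x := Equiv.sum_comp g l
  refine ⟨g, le_antisymm ?_ ?_⟩
  · rw [← hsum]
    exact maxSum_marginals_le hlg (by rw [Fintype.card_sum]; lia)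
  · rw [← hsum, ← (sum_marginals_eq_two_mul_iff hlg).2 hsupp, ← hcard]
    exact sum_le_maxSum _ _

lemma exists_swap_not_weakMajorizes [DecidableEq α] [DecidableEq β] (hl : 0 ≤ l) {a b : ℕ}
    (hbox : IsTightBox (Fintype.card α) (Fintype.card β) #{x | l x ≠ 0} a b) :
    ∃ (g : Equiv.Perm (α × β)) (p q : α × β), ∃ ε ∈ Set.Icc (0 : ℝ) 1,
      ∀ g' : Equiv.Perm (α × β),
        ¬ WeakMajorizes (marginals ((1 - ε) • (l ∘ g) + ε • (l ∘ g ∘ Equiv.swap p q)))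
          (marginals (l ∘ g')) := by
  let Packed (g : Equiv.Perm (α × β)) : Prop :=
    maxSum (marginals (l ∘ g)) (a + b) = 2 * ∑ x, l x
  have hcard : a + b ≤ Fintype.card (β ⊕ α) := by
    rw [Fintype.card_sum]
    linarith [hbox.le_rows, hbox.le_cols]
  have hnonneg (g : Equiv.Perm (α × β)) : 0 ≤ l ∘ g := fun x => hl (g x)
  have hsum (g : Equiv.Perm (α × β)) : ∑ x, (l ∘ g) x = ∑ x, l x := Equiv.sum_comp g l
  obtain ⟨g₀, hg₀⟩ := exists_perm_maxSum_marginals_eq hl hbox.le_rows hbox.le_cols hbox.le_area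
  obtain ⟨g, hg, hmax⟩ := Set.exists_max_image {g | Packed g}
    (fun g => maxSum (marginals (l ∘ g)) 1) (Set.toFinite _) ⟨g₀, hg₀⟩
  obtain ⟨x₀, -⟩ := card_pos.1 hbox.pos
  have : Nonempty (β ⊕ α) := ⟨.inl x₀.2⟩
  obtain ⟨J, hJ⟩ := exists_maxSum_one_eq (marginals (l ∘ g))
  obtain ⟨A, hAcard, hA⟩ := exists_maxSum_eq_sum (marginals (l ∘ g)) hcard
  have hsupp := (sum_marginals_eq_two_mul_iff (hnonneg g)).1 (hA.symm.trans (hg.trans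
    (by rw [hsum])))
  have hcell : #{x | (l ∘ g) x ≠ 0} = #{x | l x ≠ 0} := card_equiv g (by simp)
  obtain ⟨p, hp, q, hq, hpq⟩ := (hcell ▸ hbox).exists_lt (hnonneg g) hAcard hsupp J
  obtain ⟨ε, hε, hgap⟩ := exists_mem_Ioo_forall_lt_mul
    (x := fun g : {g // ¬ Packed g} => maxSum (marginals (l ∘ g.1)) (a + b))
    fun g => lt_of_le_of_ne (hsum g.1 ▸ maxSum_marginals_le (hnonneg g.1) hcard) g.2
  refine ⟨g, p, q, ε, Set.Ioo_subset_Icc_self hε, fun g' hmaj => ?_⟩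
  by_cases hg' : Packed g'
  · refine ((hmaj 1).trans (hmax g' hg')).not_gt ?_
    rw [hJ]
    exact (marginals_lt_marginals_mix_swap hp hq hpq hε.1).trans_le (le_maxSum_one _ J)
  · refine ((hmaj (a + b)).trans_lt (hgap ⟨g', hg'⟩)).not_ge ?_
    rw [← hg, marginals_add, marginals_smul]
    refine mul_maxSum_le_maxSum_smul_add _ _ (marginals_nonneg ?_) hcard
    exact smul_nonneg hε.1.le (hnonneg (Equiv.swap p q |>.trans g))

end Rearrangement

section PartialTrace

variable {d₁ d₂ : ℕ} {M : Matrix (Fin d₁ × Fin d₂) (Fin d₁ × Fin d₂) ℂ}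

lemma marginals_re_diag :
    marginals (fun x => (M x x).re) =
      Sum.elim (fun t => (ptrace1 M t t).re) (fun i => (ptrace2 M i i).re) := by
  ext (t | i)
  · simp [marginals_inl, ptrace1]
  · simp [marginals_inr, ptrace2]

lemma isDiag_ptrace1 (hM : M.IsDiag) : (ptrace1 M).IsDiag := by
  intro s t hst
  rw [ptrace1, of_apply]
  exact sum_eq_zero fun _ _ => hM (by simp [hst])

lemma isDiag_ptrace2 (hM : M.IsDiag) : (ptrace2 M).IsDiag := by
  intro i j hij
  rw [ptrace2, of_apply]
  exact sum_eq_zero fun _ _ => hM (by simp [hij])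

lemma weakMajorizes_marginals_eigenvalues_ptrace (h₁ : (ptrace1 M).IsHermitian)
    (h₂ : (ptrace2 M).IsHermitian) :
    WeakMajorizes (marginals fun x => (M x x).re) (Sum.elim h₁.eigenvalues h₂.eigenvalues) := by
  rw [marginals_re_diag]
  exact (weakMajorizes_re_diag_eigenvalues h₁).sumElim (weakMajorizes_re_diag_eigenvalues h₂)

lemma weakMajorizes_eigenvalues_ptrace_marginals (hM : M.IsDiag)
    (h₁ : (ptrace1 M).IsHermitian) (h₂ : (ptrace2 M).IsHermitian) :
    WeakMajorizes (Sum.elim h₁.eigenvalues h₂.eigenvalues) (marginals fun x => (M x x).re) := by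
  rw [marginals_re_diag]
  exact (weakMajorizes_eigenvalues_re_diag h₁ (isDiag_ptrace1 hM)).sumElim
    (weakMajorizes_eigenvalues_re_diag h₂ (isDiag_ptrace2 hM))

end PartialTrace

section BoxExistence

lemma sqrt_lt_sub_sqrt_mul {d r t : ℝ} (hr : 0 ≤ r) (hd : 0 ≤ d) (htd : t ≤ d)
    (h : r < (d - √(t * d)) ^ 2) : √r < d - √(t * d) := by
  have hle : √(t * d) ≤ d := Real.sqrt_le_iff.2 ⟨hd, by nlinarith⟩
  calc √r < √((d - √(t * d)) ^ 2) := Real.sqrt_lt_sqrt hr h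
    _ = d - √(t * d) := Real.sqrt_sq (sub_nonneg.2 hle)

lemma mul_two_mul_sqrt_add_lt {d r t : ℝ} (hr : 0 ≤ r) (ht : 0 ≤ t) (htd : t ≤ d)
    (h : r < (d - √(t * d)) ^ 2) : d * (2 * √r + t) < d ^ 2 + r := by
  have hd : 0 ≤ d := ht.trans htd
  have hlt : √(t * d) < d - √r := lt_sub_comm.1 (sqrt_lt_sub_sqrt_mul hr hd htd h)
  have hsq : t * d < (d - √r) ^ 2 := by
    rw [← Real.sq_sqrt (mul_nonneg ht hd)]
    gcongr
  linarith [Real.sq_sqrt hr, sub_sq d (√r)]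

lemma isTightBox_self {d n : ℕ} (hn : 2 ≤ n) (hnd : n < d) : IsTightBox d d (n * n) n n where
  pos := by positivity
  le_rows := hnd.le
  le_cols := hnd.le
  le_area := le_rfl
  le_cells := by nlinarith
  mul_lt_of_column := by zify at *; nlinarith
  mul_lt_of_row := by zify at *; nlinarith

lemma isTightBox_of_lt_sub_sqrt_mul_sq {d r t a b : ℕ} (htd : t ≤ d) (hr : 0 < r)
    (h : (r : ℝ) < (d - √(t * d)) ^ 2) (ha : a ≤ Nat.sqrt r + 1) (hb : b ≤ Nat.sqrt r + 1)
    (hsum : a + b = 2 * Nat.sqrt r + t) (hcells : a + b ≤ r) (hab : r ≤ a * b) :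
    IsTightBox d d r a b := by
  have htdR : (t : ℝ) ≤ d := by exact_mod_cast htd
  have hsqrt : (Nat.sqrt r : ℝ) ≤ √r := Real.nat_sqrt_le_real_sqrt
  have hsqrt_lt : Nat.sqrt r < d := by
    have hlt := sqrt_lt_sub_sqrt_mul r.cast_nonneg d.cast_nonneg htdR h
    exact_mod_cast hsqrt.trans_lt (hlt.trans_le (sub_le_self _ (Real.sqrt_nonneg _)))
  have hlines : d * (a + b) < d ^ 2 + r := by
    have hlt := mul_two_mul_sqrt_add_lt r.cast_nonneg t.cast_nonneg htdR h
    rw [hsum]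
    have : (d : ℝ) * (2 * Nat.sqrt r + t) ≤ d * (2 * √r + t) := by gcongr
    exact_mod_cast this.trans_lt hlt
  exact ⟨hr, by lia, by lia, hab, hcells, hlines, hlines⟩

lemma exists_isTightBox {d r : ℕ} (hd : 3 ≤ d) (hr : 4 ≤ r)
    (hcase : (r < d * d ∧ IsSquare r) ∨
      ((r : ℝ) < ((d : ℝ) - √d) ^ 2 ∧
        r - Nat.sqrt r ^ 2 ≠ 0 ∧ r - Nat.sqrt r ^ 2 ≤ Nat.sqrt r) ∨
      ((r : ℝ) < ((d : ℝ) - √(2 * d)) ^ 2 ∧ Nat.sqrt r < r - Nat.sqrt r ^ 2)) :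
    ∃ a b, IsTightBox d d r a b := by
  have hsqrt : 2 ≤ Nat.sqrt r := Nat.le_sqrt.2 hr
  have hlt : r < (Nat.sqrt r + 1) * (Nat.sqrt r + 1) := Nat.lt_succ_sqrt r
  rcases hcase with ⟨hrd, n, rfl⟩ | ⟨hrd, hne, hle⟩ | ⟨hrd, hgt⟩
  · exact ⟨n, n, isTightBox_self (by simpa using hsqrt) (Nat.mul_self_lt_mul_self_iff.1 hrd)⟩
  · have hsq : Nat.sqrt r ^ 2 < r := by lia
    have hle' : r ≤ Nat.sqrt r ^ 2 + Nat.sqrt r := by lia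
    exact ⟨Nat.sqrt r, Nat.sqrt r + 1, isTightBox_of_lt_sub_sqrt_mul_sq (t := 1) (by lia) (by lia)
      (by simpa using hrd) (by lia) le_rfl (by lia) (by nlinarith) (by linarith)⟩
  · have hsq : Nat.sqrt r ^ 2 + Nat.sqrt r < r := by lia
    exact ⟨Nat.sqrt r + 1, Nat.sqrt r + 1, isTightBox_of_lt_sub_sqrt_mul_sq (t := 2) (by lia)
      (by lia) (by simpa using hrd) le_rfl le_rfl (by lia) (by nlinarith) hlt.le⟩

end BoxExistence

theorem impossible_ranks_general {d₁ d₂ a b : ℕ}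
    {C : Matrix (Fin d₁ × Fin d₂) (Fin d₁ × Fin d₂) ℂ} (hC : C.PosSemidef)
    (hbox : IsTightBox d₁ d₂ C.rank a b) :
    ∃ U : Matrix (Fin d₁ × Fin d₂) (Fin d₁ × Fin d₂) ℂ,
      U ∈ Matrix.unitaryGroup (Fin d₁ × Fin d₂) ℂ ∧
      ∀ D : Matrix (Fin d₁ × Fin d₂) (Fin d₁ × Fin d₂) ℂ, D.IsDiag →
        (∃ g : Equiv.Perm (Fin d₁ × Fin d₂), ∀ p, D p p = (hC.1.eigenvalues (g p) : ℂ)) →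
        ∀ (hU1 : (ptrace1 (U * C * Uᴴ)).IsHermitian)
          (hU2 : (ptrace2 (U * C * Uᴴ)).IsHermitian)
          (hD1 : (ptrace1 D).IsHermitian) (hD2 : (ptrace2 D).IsHermitian),
          ¬ WeakMajorizes (Sum.elim hU1.eigenvalues hU2.eigenvalues)
              (Sum.elim hD1.eigenvalues hD2.eigenvalues) := by
  rw [hC.1.rank_eq_card_non_zero_eigs, Fintype.card_subtype] at hbox
  obtain ⟨g, p, q, ε, hε, hnot⟩ := exists_swap_not_weakMajorizes (l := hC.1.eigenvalues)
    hC.eigenvalues_nonneg (by simpa only [Fintype.card_fin] using hbox)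
  obtain ⟨U, hU, hdiag⟩ := exists_unitary_diag_conj_eq hC.1 g (Equiv.swap_mul_self p q) hε
  refine ⟨U, hU, fun D hD ⟨g', hg'⟩ hU1 hU2 hD1 hD2 hmaj => hnot g' ?_⟩
  have hlower := weakMajorizes_marginals_eigenvalues_ptrace hU1 hU2
  have hupper := weakMajorizes_eigenvalues_ptrace_marginals hD hD1 hD2
  simp only [hdiag, Complex.ofReal_re] at hlower
  simp only [hg', Complex.ofReal_re] at hupper
  exact (hlower.trans hmaj).trans hupper

theorem impossible_ranks (d : ℕ) (hd : 3 ≤ d)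
    (C : Matrix (Fin d × Fin d) (Fin d × Fin d) ℂ) (hC : C.PosSemidef)
    (hr : 4 ≤ C.rank)
    (hcase :
      (C.rank < d * d ∧ IsSquare C.rank) ∨
      ((C.rank : ℝ) < ((d : ℝ) - Real.sqrt d) ^ 2 ∧
        C.rank - Nat.sqrt C.rank ^ 2 ≠ 0 ∧ C.rank - Nat.sqrt C.rank ^ 2 ≤ Nat.sqrt C.rank) ∨
      ((C.rank : ℝ) < ((d : ℝ) - Real.sqrt (2 * d)) ^ 2 ∧
        Nat.sqrt C.rank < C.rank - Nat.sqrt C.rank ^ 2)) :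
    ∃ U : Matrix (Fin d × Fin d) (Fin d × Fin d) ℂ,
      U ∈ Matrix.unitaryGroup (Fin d × Fin d) ℂ ∧
      ∀ D : Matrix (Fin d × Fin d) (Fin d × Fin d) ℂ, D.IsDiag →
        (∃ g : Equiv.Perm (Fin d × Fin d), ∀ p, D p p = (hC.1.eigenvalues (g p) : ℂ)) →
        ∀ (hU1 : (ptrace1 (U * C * Uᴴ)).IsHermitian)
          (hU2 : (ptrace2 (U * C * Uᴴ)).IsHermitian)
          (hD1 : (ptrace1 D).IsHermitian) (hD2 : (ptrace2 D).IsHermitian),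
          ¬ Majorizes (Sum.elim hU1.eigenvalues hU2.eigenvalues)
              (Sum.elim hD1.eigenvalues hD2.eigenvalues) := by
  obtain ⟨a, b, hbox⟩ := exists_isTightBox hd hr hcase
  obtain ⟨U, hU, hnot⟩ := impossible_ranks_general hC hbox
  exact ⟨U, hU, fun D hD hg _ _ _ _ hmaj => hnot D hD hg _ _ _ _ hmaj.1⟩
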